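/- Let n ≥ 1. There exists a constant c = c(n) > 0 such that for every integrable function v on ℝ^n supported in the cube Q = (-1/2,1/2)^n with ‖v‖_{L^1} = 1, one has ∫_Q M^loc v(x) dx ≥ c ∫_Q |v(x)| ln₊|v(x)| dx. -/

import Mathlib

open MeasureTheory Real Set Metric ENNReal

noncomputable section

/-- `ℝ^n` with the Euclidean norm. -/
abbrev En (n : ℕ) := EuclideanSpace ℝ (Fin n)

/-- `ln₊ t = max (ln t) 0`. -/
def lnp (t : ℝ) : ℝ := max (Real.log t) 0

/-- The unit cube `Q = (-1/2, 1/2)^n`. -/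
def unitQ (n : ℕ) : Set (En n) := {x | ∀ i, -(1/2 : ℝ) < x i ∧ x i < 1/2}

/-- The dilate `φ_t(y) = t^{-n} φ(y/t)` convolved with `f` at `x`:
`(φ_t ∗ f)(x) = ∫ t^{-n} φ((x-y)/t) f(y) dy`. -/
def phiConv (n : ℕ) (φ f : En n → ℝ) (t : ℝ) (x : En n) : ℝ :=
  ∫ y, (t ^ n)⁻¹ * φ (t⁻¹ • (x - y)) * f y

/-- The maximal function `𝓜_φ f(x) = sup_{t>0} |(φ_t ∗ f)(x)|`. -/
def Mphi (n : ℕ) (φ f : En n → ℝ) (x : En n) : ℝ :=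
  ⨆ t : {t : ℝ // 0 < t}, |phiConv n φ f t.1 x|

/-- A smooth function supported in the closed unit ball with integral `1`. -/
def IsTestFun (n : ℕ) (φ : En n → ℝ) : Prop :=
  ContDiff ℝ (⊤ : ℕ∞) φ ∧ (∀ x, x ∉ Metric.closedBall (0 : En n) 1 → φ x = 0) ∧ (∫ x, φ x) = 1

/-- Membership in the Hardy space `H^1(ℝ^n)`: the maximal function `𝓜_φ f` is
integrable for every admissible `φ`. -/
def MemH1 (n : ℕ) (f : En n → ℝ) : Prop :=
  ∀ φ : En n → ℝ, IsTestFun n φ → Integrable (Mphi n φ f)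

/-- The cube `Q_k = k + Q` for `k ∈ ℤ^n`. -/
def Qk (n : ℕ) (k : Fin n → ℤ) : Set (En n) :=
  {x | ∀ i, (k i : ℝ) - 1/2 < x i ∧ x i < (k i : ℝ) + 1/2}

/-- The lattice point `k ∈ ℤ^n` viewed as a point of `ℝ^n`. -/
def zv (n : ℕ) (k : Fin n → ℤ) : En n :=
  (EuclideanSpace.equiv (Fin n) ℝ).symm (fun i => (k i : ℝ))

/-- `μ_k = ‖f_k‖_{L^1} = ∫_{Q_k} |f|`. -/
def muk (n : ℕ) (f : En n → ℝ) (k : Fin n → ℤ) : ℝ := ∫ x in Qk n k, |f x|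

/-- The local Hardy–Littlewood maximal function
`M^loc f(x) = sup_{0<r<1} r^{-n} ∫_{|y-x|<r} |f(y)| dy`. -/
def Mloc (n : ℕ) (f : En n → ℝ) (x : En n) : ℝ :=
  ⨆ r : Set.Ioo (0 : ℝ) 1, ((r : ℝ) ^ n)⁻¹ * ∫ y in Metric.ball x (r : ℝ), |f y|

/-!
Let `ν` be the measure `|v| dx` and `M` its local maximal function. Stopping the radii at
essentially the largest scale where the density of `ν` exceeds `l`, and selecting disjoint balls by
Vitali's covering theorem, gives for large `l` a weak-type inequality in the reverse direction,
`ν (Q ∩ {M > l}) ≤ C l |Q ∩ {2 ^ n M ≥ l}|`. Dividing by `1 + l` and integrating over `l` bounds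
`∫_Q log⁺ M dν` by `C ∫_Q M dx`, and `|v| ≤ C M` almost everywhere on `Q` by differentiation, so
`log⁺ |v|` may replace `log⁺ M`. The only geometry used is that balls centred in `Q` meet `Q` in
measure comparable to `r ^ n`, which for convex `Q` follows by shrinking `Q` towards the centre.
-/

open scoped NNReal

/-- The local maximal function `sup_{0<r<1} r^{-d} ν(B(x,r))` of a measure `ν`. It takes values in
`[0, ∞]`, so that, unlike for `Mloc`, an infinite supremum is not replaced by `0`. -/
def localMaximal {X : Type*} [PseudoMetricSpace X] [MeasurableSpace X] (d : ℕ) (ν : Measure X)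
    (x : X) : ℝ≥0∞ :=
  ⨆ r ∈ Ioo (0 : ℝ) 1, ν (ball x r) / ENNReal.ofReal r ^ d

/-- Lower `d`-regularity of a set `Q` for the measure `μ`: balls of radius `r < 1` centred in `Q`
meet `Q` in measure at least `r ^ d / K`. -/
def IsLowerRegular {X : Type*} [PseudoMetricSpace X] [MeasurableSpace X] (d : ℕ) (μ : Measure X)
    (K : ℝ≥0∞) (Q : Set X) : Prop :=
  ∀ x ∈ Q, ∀ r ∈ Ioo (0 : ℝ) 1, ENNReal.ofReal r ^ d ≤ K * μ (ball x r ∩ Q)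

theorem ofReal_mul_pow {a : ℝ} (ha : 0 ≤ a) (r : ℝ) (d : ℕ) :
    ENNReal.ofReal (a * r) ^ d = ENNReal.ofReal a ^ d * ENNReal.ofReal r ^ d := by
  rw [ENNReal.ofReal_mul ha, mul_pow]

theorem ofReal_pow_pos {r : ℝ} (hr : 0 < r) (d : ℕ) : 0 < ENNReal.ofReal r ^ d :=
  ENNReal.pow_pos (ENNReal.ofReal_pos.2 hr) d

theorem ofReal_pow_ne_top (r : ℝ) (d : ℕ) : ENNReal.ofReal r ^ d ≠ ∞ :=
  ENNReal.pow_ne_top ENNReal.ofReal_ne_top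

section LocalMaximal

variable {X : Type*} [PseudoMetricSpace X] [MeasurableSpace X] {d : ℕ} {ν : Measure X}

theorem measure_ball_le_localMaximal_mul {r : ℝ} (hr : r ∈ Ioo (0 : ℝ) 1) (x : X) :
    ν (ball x r) ≤ localMaximal d ν x * ENNReal.ofReal r ^ d :=
  (ENNReal.div_le_iff_le_mul (.inl (ofReal_pow_pos hr.1 d).ne') (.inl (ofReal_pow_ne_top r d))).1
    (le_iSup₂ (f := fun r (_ : r ∈ Ioo (0 : ℝ) 1) => ν (ball x r) / ENNReal.ofReal r ^ d) r hr)

theorem lt_localMaximal_iff {l : ℝ≥0∞} {x : X} :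
    l < localMaximal d ν x ↔ ∃ r ∈ Ioo (0 : ℝ) 1, l * ENNReal.ofReal r ^ d < ν (ball x r) := by
  simp only [localMaximal, lt_iSup_iff, exists_prop]
  refine exists_congr fun r => and_congr_right fun hr => ?_
  exact ENNReal.lt_div_iff_mul_lt (.inl (ofReal_pow_pos hr.1 d).ne') (.inl (ofReal_pow_ne_top r d))

theorem lowerSemicontinuous_measure_ball (ν : Measure X) (r : ℝ) :
    LowerSemicontinuous fun x => ν (ball x r) := by
  intro x a (ha : a < ν (ball x r))
  have hmono : Monotone fun s : Iio r => ball x (s : ℝ) := fun s t hst => ball_subset_ball hst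
  have hunion : ball x r = ⋃ s : Iio r, ball x (s : ℝ) := by
    ext y
    simp only [mem_iUnion, mem_ball, Subtype.exists, mem_Iio, exists_prop]
    exact ⟨fun h => (exists_between h).imp fun _ => And.symm, fun ⟨_, hs, h⟩ => h.trans hs⟩
  rw [hunion, hmono.measure_iUnion, lt_iSup_iff] at ha
  obtain ⟨⟨s, hs⟩, has⟩ := ha
  filter_upwards [ball_mem_nhds x (sub_pos.2 hs)] with y hy
  refine has.trans_le (measure_mono (ball_subset_ball' ?_))
  rw [mem_ball, dist_comm] at hy
  linarith

theorem lowerSemicontinuous_localMaximal (d : ℕ) (ν : Measure X) :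
    LowerSemicontinuous (localMaximal d ν) := by
  intro x l hl
  obtain ⟨r, hr, hlr⟩ := lt_localMaximal_iff.1 hl
  filter_upwards [lowerSemicontinuous_measure_ball ν r x _ hlr] with y hy
  exact lt_localMaximal_iff.2 ⟨r, hr, hy⟩

theorem measurable_localMaximal [OpensMeasurableSpace X] (d : ℕ) (ν : Measure X) :
    Measurable (localMaximal d ν) :=
  (lowerSemicontinuous_localMaximal d ν).measurable

theorem le_two_pow_mul_localMaximal {l : ℝ≥0∞} {x y : X} {r : ℝ} (hr : r ∈ Ioo (0 : ℝ) (1 / 2))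
    (hl : l * ENNReal.ofReal r ^ d ≤ ν (ball x r)) (hy : y ∈ ball x r) :
    l ≤ 2 ^ d * localMaximal d ν y := by
  have hsub : ball x r ⊆ ball y (2 * r) := by
    refine ball_subset_ball' ?_
    rw [mem_ball, dist_comm] at hy
    linarith
  have h2r : 2 * r ∈ Ioo (0 : ℝ) 1 := ⟨by linarith [hr.1], by linarith [hr.2]⟩
  rw [← ENNReal.mul_le_mul_iff_left (ofReal_pow_pos hr.1 d).ne' (ofReal_pow_ne_top r d)]
  calc l * ENNReal.ofReal r ^ d ≤ ν (ball y (2 * r)) := hl.trans (measure_mono hsub)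
    _ ≤ localMaximal d ν y * ENNReal.ofReal (2 * r) ^ d := measure_ball_le_localMaximal_mul h2r y
    _ = 2 ^ d * localMaximal d ν y * ENNReal.ofReal r ^ d := by
      rw [ofReal_mul_pow zero_le_two, ENNReal.ofReal_ofNat]
      ring

end LocalMaximal

section ReverseWeakType

variable {X : Type*} [PseudoMetricSpace X] [MeasurableSpace X] {d : ℕ} {μ ν : Measure X}
  {K l : ℝ≥0∞} {Q : Set X}

theorem lt_half_of_mul_pow_lt_measure_ball (hl : 2 ^ d * ν univ ≤ l) {x : X} {r : ℝ}
    (h : l * ENNReal.ofReal r ^ d < ν (ball x r)) : r < 1 / 2 := by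
  by_contra! hr
  have hone : 1 ≤ ENNReal.ofReal (2 * r) ^ d :=
    one_le_pow₀ (ENNReal.one_le_ofReal.2 (by linarith))
  refine h.not_ge ?_
  calc ν (ball x r) ≤ ν univ * 1 := by rw [mul_one]; exact measure_mono (subset_univ _)
    _ ≤ ν univ * (2 ^ d * ENNReal.ofReal r ^ d) := by
      rw [ofReal_mul_pow zero_le_two, ENNReal.ofReal_ofNat] at hone
      gcongr
    _ = 2 ^ d * ν univ * ENNReal.ofReal r ^ d := by ring
    _ ≤ l * ENNReal.ofReal r ^ d := by gcongr

theorem exists_stopping_radius (hl : 2 ^ d * ν univ ≤ l) {x : X} (hx : l < localMaximal d ν x) :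
    ∃ r ∈ Ioo (0 : ℝ) (1 / 2), l * ENNReal.ofReal r ^ d < ν (ball x r) ∧
      ν (ball x (5 * r)) ≤ l * ENNReal.ofReal (5 * r) ^ d := by
  obtain ⟨r₀, ⟨hr₀, -⟩, hlr₀⟩ := lt_localMaximal_iff.1 hx
  set S := {r : ℝ | 0 < r ∧ l * ENNReal.ofReal r ^ d < ν (ball x r)}
  have hS : ∀ r ∈ S, r < 1 / 2 := fun r hr => lt_half_of_mul_pow_lt_measure_ball hl hr.2
  have hbdd : BddAbove S := ⟨1 / 2, fun r hr => (hS r hr).le⟩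
  have hr₀S : r₀ ∈ S := ⟨hr₀, hlr₀⟩
  have hsup : 0 < sSup S := hr₀.trans_le (le_csSup hbdd hr₀S)
  obtain ⟨r, hrS, hr⟩ := exists_lt_of_lt_csSup ⟨r₀, hr₀S⟩ (half_lt_self hsup)
  refine ⟨r, ⟨hrS.1, hS r hrS⟩, hrS.2, not_lt.1 fun h => ?_⟩
  have h5r : 5 * r ≤ sSup S := le_csSup hbdd ⟨by linarith [hrS.1], h⟩
  linarith [hrS.1]

theorem IsLowerRegular.measure_ball_five_mul_le (hQ : IsLowerRegular d μ K Q) {x : X} (hx : x ∈ Q)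
    {r : ℝ} (hr : r ∈ Ioo (0 : ℝ) 1) (h : ν (ball x (5 * r)) ≤ l * ENNReal.ofReal (5 * r) ^ d) :
    ν (ball x (5 * r)) ≤ 5 ^ d * K * l * μ (ball x r ∩ Q) :=
  calc ν (ball x (5 * r)) ≤ l * (5 ^ d * ENNReal.ofReal r ^ d) := by
        rwa [ofReal_mul_pow (by norm_num), ENNReal.ofReal_ofNat] at h
    _ ≤ l * (5 ^ d * (K * μ (ball x r ∩ Q))) := by gcongr; exact hQ x hx r hr
    _ = 5 ^ d * K * l * μ (ball x r ∩ Q) := by ring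

/- The enlarged Vitali balls lie past the stopping radius, so their `ν`-mass is controlled by `l`,
while each selected ball lies in the superlevel set on the right. -/
theorem measure_lt_localMaximal_le [SecondCountableTopology X] [OpensMeasurableSpace X]
    (hQ : IsLowerRegular d μ K Q) (hl : 2 ^ d * ν univ ≤ l) :
    ν.restrict Q {x | l < localMaximal d ν x} ≤
      5 ^ d * K * l * μ.restrict Q {x | l ≤ 2 ^ d * localMaximal d ν x} := by
  set E := {x | l < localMaximal d ν x} ∩ Q
  choose! ρ hρ hlρ h5ρ using fun x (hx : x ∈ E) => exists_stopping_radius hl hx.1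
  obtain ⟨u, huE, hdisj, hcover⟩ := Vitali.exists_disjoint_subfamily_covering_enlargement_ball E
    (fun x => x) ρ (1 / 2) (fun x hx => (hρ x hx).2.le) 5 (by norm_num)
  have hu : u.Countable := hdisj.countable_of_isOpen (fun _ _ => isOpen_ball)
    fun x hx => ⟨x, mem_ball_self (hρ x (huE hx)).1⟩
  have hEsub : E ⊆ ⋃ x ∈ u, ball x (5 * ρ x) := fun x hx => by
    obtain ⟨b, hb, hxb⟩ := hcover x hx
    exact mem_biUnion hb (hxb (mem_ball_self (hρ x hx).1))
  have hsub : ⋃ x ∈ u, ball x (ρ x) ⊆ {y | l ≤ 2 ^ d * localMaximal d ν y} :=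
    iUnion₂_subset fun x hx _ hy =>
      le_two_pow_mul_localMaximal (hρ x (huE hx)) (hlρ x (huE hx)).le hy
  calc ν.restrict Q {x | l < localMaximal d ν x} = ν E :=
        Measure.restrict_apply (measurableSet_lt measurable_const (measurable_localMaximal d ν))
    _ ≤ ∑' x : u, ν (ball (x : X) (5 * ρ x)) :=
        (measure_mono hEsub).trans (measure_biUnion_le ν hu _)
    _ ≤ ∑' x : u, 5 ^ d * K * l * μ (ball (x : X) (ρ x) ∩ Q) :=
        ENNReal.tsum_le_tsum fun x =>
          hQ.measure_ball_five_mul_le (huE x.2).2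
            (Ioo_subset_Ioo_right (by norm_num) (hρ x (huE x.2))) (h5ρ x (huE x.2))
    _ = 5 ^ d * K * l * μ.restrict Q (⋃ x ∈ u, ball x (ρ x)) := by
        rw [ENNReal.tsum_mul_left, measure_biUnion hu hdisj fun _ _ => measurableSet_ball]
        simp only [Measure.restrict_apply measurableSet_ball]
    _ ≤ 5 ^ d * K * l * μ.restrict Q {x | l ≤ 2 ^ d * localMaximal d ν x} := by gcongr

end ReverseWeakType

section Differentiation

variable {X : Type*} [MetricSpace X] [SecondCountableTopology X] [HasBesicovitchCovering X]
  [MeasurableSpace X] [BorelSpace X] {d : ℕ} {μ : Measure X} [IsLocallyFiniteMeasure μ]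

theorem ae_rnDeriv_le_localMaximal (ν : Measure X) [IsLocallyFiniteMeasure ν] {K : ℝ≥0∞}
    {Q : Set X} (hQ : IsLowerRegular d μ K Q) :
    ∀ᵐ x ∂μ.restrict Q, ν.rnDeriv μ x ≤ 2 ^ d * K * localMaximal d ν x := by
  refine (ae_restrict_iff (measurableSet_le (ν.measurable_rnDeriv μ)
    ((measurable_localMaximal d ν).const_mul _))).2 ?_
  filter_upwards [Besicovitch.ae_tendsto_rnDeriv ν μ] with x hlim hx
  refine le_of_tendsto hlim ?_
  filter_upwards [Ioo_mem_nhdsGT (show (0 : ℝ) < 1 / 2 by norm_num)] with r ⟨hr0, hr⟩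
  refine ENNReal.div_le_of_le_mul ?_
  calc ν (closedBall x r) ≤ ν (ball x (2 * r)) :=
        measure_mono (closedBall_subset_ball (by linarith))
    _ ≤ localMaximal d ν x * ENNReal.ofReal (2 * r) ^ d :=
        measure_ball_le_localMaximal_mul ⟨by linarith, by linarith⟩ x
    _ = localMaximal d ν x * (2 ^ d * ENNReal.ofReal r ^ d) := by
        rw [ofReal_mul_pow zero_le_two, ENNReal.ofReal_ofNat]
    _ ≤ localMaximal d ν x * (2 ^ d * (K * μ (closedBall x r))) := by
        gcongr
        refine (hQ x hx r ⟨hr0, by linarith⟩).trans ?_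
        gcongr
        exact inter_subset_left.trans ball_subset_closedBall
    _ = 2 ^ d * K * localMaximal d ν x * μ (closedBall x r) := by ring

theorem ae_localMaximal_ne_top (ν : Measure X) [IsFiniteMeasure ν] {C : ℝ≥0∞} (hC : C ≠ ∞)
    (hμ : ∀ x, ∀ r ∈ Ioo (0 : ℝ) 1, μ (closedBall x r) ≤ C * ENNReal.ofReal r ^ d) :
    ∀ᵐ x ∂μ, localMaximal d ν x ≠ ∞ := by
  filter_upwards [Besicovitch.ae_tendsto_rnDeriv ν μ, ν.rnDeriv_ne_top μ] with x hlim hfin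
  set D := ν.rnDeriv μ x + 1
  have hD : D ≠ ∞ := ENNReal.add_ne_top.2 ⟨hfin, ENNReal.one_ne_top⟩
  obtain ⟨ε, hε, hsmall⟩ := mem_nhdsGT_iff_exists_Ioo_subset.1
    (hlim.eventually (gt_mem_nhds (ENNReal.lt_add_right hfin one_ne_zero)))
  have hbound : localMaximal d ν x ≤ max (D * C) (ν univ / ENNReal.ofReal ε ^ d) := by
    refine iSup₂_le fun r hr => ?_
    rcases lt_or_ge r ε with hrε | hεr
    · refine le_max_of_le_left (ENNReal.div_le_of_le_mul ?_)
      calc ν (ball x r) ≤ ν (closedBall x r) := measure_mono ball_subset_closedBall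
        _ ≤ D * μ (closedBall x r) :=
          (ENNReal.div_le_iff_le_mul (.inr hD) (.inr (by simp [D]))).1 (hsmall ⟨hr.1, hrε⟩).le
        _ ≤ D * C * ENNReal.ofReal r ^ d := by rw [mul_assoc]; gcongr; exact hμ x r hr
    · refine le_max_of_le_right ?_
      gcongr
      exact subset_univ _
  refine ne_top_of_le_ne_top (max_ne_top (ENNReal.mul_ne_top hD hC) ?_) hbound
  exact ENNReal.div_ne_top (measure_ne_top ν _) (ofReal_pow_pos hε d).ne'

end Differentiation

section PosLog

variable {X : Type*} [MeasurableSpace X]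

theorem posLog_le_integral {s : ℝ} (hs : 0 ≤ s) : log⁺ s ≤ ∫ t in 0..s, (1 + t)⁻¹ := by
  rw [intervalIntegral.integral_comp_add_left (fun t => t⁻¹), add_zero,
    integral_inv_of_pos one_pos (by linarith), div_one, posLog_eq_log_max_one hs]
  exact log_le_log (by positivity) (max_le (by linarith) (by linarith))

theorem lintegral_posLog_toReal_le_lintegral_measure_lt (ν : Measure X) {g : X → ℝ≥0∞}
    (hg : AEMeasurable g ν) :
    ∫⁻ x, ENNReal.ofReal (log⁺ (g x).toReal) ∂ν ≤
      ∫⁻ t in Ioi (0 : ℝ), ν {x | ENNReal.ofReal t < g x} * ENNReal.ofReal (1 + t)⁻¹ := by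
  have hint : ∀ s > 0, IntervalIntegrable (fun t : ℝ => (1 + t)⁻¹) volume 0 s := fun s hs => by
    refine ContinuousOn.intervalIntegrable (ContinuousOn.inv₀ (by fun_prop) fun t ht => ?_)
    rw [uIcc_of_le hs.le] at ht
    linarith [ht.1]
  have hnonneg : ∀ᵐ t ∂volume.restrict (Ioi (0 : ℝ)), 0 ≤ (1 + t)⁻¹ := by
    filter_upwards [ae_restrict_mem measurableSet_Ioi] with t (ht : 0 < t)
    positivity
  calc ∫⁻ x, ENNReal.ofReal (log⁺ (g x).toReal) ∂ν
      ≤ ∫⁻ x, ENNReal.ofReal (∫ t in 0..(g x).toReal, (1 + t)⁻¹) ∂ν :=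
        lintegral_mono fun x => ENNReal.ofReal_le_ofReal (posLog_le_integral ENNReal.toReal_nonneg)
    _ = ∫⁻ t in Ioi (0 : ℝ), ν {x | t < (g x).toReal} * ENNReal.ofReal (1 + t)⁻¹ :=
        lintegral_comp_eq_lintegral_meas_lt_mul ν (ae_of_all _ fun _ => ENNReal.toReal_nonneg)
          hg.ennreal_toReal hint hnonneg
    _ ≤ ∫⁻ t in Ioi (0 : ℝ), ν {x | ENNReal.ofReal t < g x} * ENNReal.ofReal (1 + t)⁻¹ := by
        refine setLIntegral_mono' measurableSet_Ioi fun t (ht : 0 < t) => ?_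
        gcongr with x
        exact fun h => ((ENNReal.ofReal_lt_ofReal_iff_of_nonneg ht.le).2 h).trans_le
          ENNReal.ofReal_toReal_le

theorem lintegral_measure_ofReal_le_le_lintegral (μ : Measure X) {g : X → ℝ≥0∞}
    (hg : AEMeasurable g μ) :
    ∫⁻ t in Ioi (0 : ℝ), μ {x | ENNReal.ofReal t ≤ g x} ≤ ∫⁻ x, g x ∂μ := by
  rcases eq_or_ne (∫⁻ x, g x ∂μ) ∞ with htop | hfin
  · exact htop ▸ le_top
  have hg_fin : ∀ᵐ x ∂μ, g x ≠ ∞ := (ae_lt_top' hg hfin).mono fun _ h => h.ne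
  calc ∫⁻ t in Ioi (0 : ℝ), μ {x | ENNReal.ofReal t ≤ g x}
      ≤ ∫⁻ t in Ioi (0 : ℝ), μ {x | t ≤ (g x).toReal} := by
        refine lintegral_mono fun t => measure_mono_ae ?_
        filter_upwards [hg_fin] with x hx h using (ENNReal.ofReal_le_iff_le_toReal hx).1 h
    _ = ∫⁻ x, ENNReal.ofReal (g x).toReal ∂μ :=
        (lintegral_eq_lintegral_meas_le μ (ae_of_all _ fun _ => ENNReal.toReal_nonneg)
          hg.ennreal_toReal).symm
    _ ≤ ∫⁻ x, g x ∂μ := lintegral_mono fun _ => ENNReal.ofReal_toReal_le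

theorem ofReal_posLog_toReal_le_add {a b : ℝ≥0∞} {A : ℝ≥0} (hb : b ≠ ∞) (h : a ≤ A * b) :
    ENNReal.ofReal (log⁺ a.toReal) ≤
      ENNReal.ofReal (log⁺ A) + ENNReal.ofReal (log⁺ b.toReal) := by
  rw [← ENNReal.ofReal_add posLog_nonneg posLog_nonneg]
  refine ENNReal.ofReal_le_ofReal (le_trans ?_ posLog_mul)
  refine posLog_le_posLog ENNReal.toReal_nonneg ?_
  simpa only [ENNReal.toReal_mul, ENNReal.coe_toReal] using
    ENNReal.toReal_mono (ENNReal.mul_ne_top ENNReal.coe_ne_top hb) h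

theorem lintegral_mul_posLog_toReal_le {μ : Measure X} {f g : X → ℝ≥0∞} {A : ℝ≥0}
    (hf : AEMeasurable f μ) (hg : AEMeasurable g μ) (hg_fin : ∀ᵐ x ∂μ, g x ≠ ∞)
    (hfg : ∀ᵐ x ∂μ, f x ≤ A * g x) :
    ∫⁻ x, f x * ENNReal.ofReal (log⁺ (f x).toReal) ∂μ ≤
      ENNReal.ofReal (log⁺ A) * ∫⁻ x, f x ∂μ +
        ∫⁻ x, ENNReal.ofReal (log⁺ (g x).toReal) ∂μ.withDensity f := by
  set L := ENNReal.ofReal (log⁺ (A : ℝ))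
  have hlog : AEMeasurable (fun x => ENNReal.ofReal (log⁺ (g x).toReal)) μ :=
    (continuous_posLog.measurable.comp_aemeasurable hg.ennreal_toReal).ennreal_ofReal
  calc ∫⁻ x, f x * ENNReal.ofReal (log⁺ (f x).toReal) ∂μ
      ≤ ∫⁻ x, (L * f x + f x * ENNReal.ofReal (log⁺ (g x).toReal)) ∂μ := by
        refine lintegral_mono_ae ?_
        filter_upwards [hfg, hg_fin] with x hx hx_fin
        grw [ofReal_posLog_toReal_le_add hx_fin hx, mul_add, mul_comm (f x)]
    _ = L * ∫⁻ x, f x ∂μ + ∫⁻ x, ENNReal.ofReal (log⁺ (g x).toReal) ∂μ.withDensity f := by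
        rw [lintegral_add_left' (hf.const_mul L), lintegral_const_mul'' L hf,
          lintegral_withDensity_eq_lintegral_mul₀ hf hlog]
        simp only [Pi.mul_apply]

end PosLog

section LLogL

variable {X : Type*} [PseudoMetricSpace X] [SecondCountableTopology X] [MeasurableSpace X]
  [OpensMeasurableSpace X] {d : ℕ} {μ ν : Measure X} {K : ℝ≥0∞} {Q : Set X}

theorem measure_lt_localMaximal_mul_le (hQ : IsLowerRegular d μ K Q) (hν : ν univ ≤ 1) {t : ℝ}
    (ht : 0 < t) :
    ν.restrict Q {x | ENNReal.ofReal t < localMaximal d ν x} * ENNReal.ofReal (1 + t)⁻¹ ≤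
      (Iic (2 ^ d)).indicator (fun _ => ν Q) t +
        5 ^ d * K * μ.restrict Q {x | ENNReal.ofReal t ≤ 2 ^ d * localMaximal d ν x} := by
  rcases le_or_gt t (2 ^ d) with htd | htd
  · rw [indicator_of_mem (mem_Iic.2 htd)]
    refine le_add_right (mul_le_of_le_of_le_one ?_ ?_)
    · exact (measure_mono (subset_univ _)).trans_eq (Measure.restrict_apply_univ Q)
    · exact ENNReal.ofReal_le_one.2 (inv_le_one_of_one_le₀ (by linarith))
  · have hl : 2 ^ d * ν univ ≤ ENNReal.ofReal t := by
      calc 2 ^ d * ν univ ≤ 2 ^ d * 1 := by gcongr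
        _ = ENNReal.ofReal (2 ^ d) := by simp [ENNReal.ofReal_pow]
        _ ≤ ENNReal.ofReal t := ENNReal.ofReal_le_ofReal htd.le
    have hfactor : ENNReal.ofReal t * ENNReal.ofReal (1 + t)⁻¹ ≤ 1 := by
      rw [← ENNReal.ofReal_mul ht.le, ← div_eq_mul_inv]
      exact ENNReal.ofReal_le_one.2 ((div_le_one (by linarith)).2 (by linarith))
    refine le_add_left ?_
    grw [measure_lt_localMaximal_le hQ hl, mul_right_comm (5 ^ d * K), mul_assoc, hfactor, mul_one]

theorem lintegral_posLog_localMaximal_le (hQ : IsLowerRegular d μ K Q) (hν : ν univ ≤ 1) :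
    ∫⁻ x in Q, ENNReal.ofReal (log⁺ (localMaximal d ν x).toReal) ∂ν ≤
      2 ^ d * ν Q + 10 ^ d * K * ∫⁻ x in Q, localMaximal d ν x ∂μ := by
  have hmeas := measurable_localMaximal d ν
  have hhead : ∫⁻ t in Ioi (0 : ℝ), (Iic (2 ^ d)).indicator (fun _ => ν Q) t = 2 ^ d * ν Q := by
    rw [lintegral_indicator_const measurableSet_Iic, Measure.restrict_apply measurableSet_Iic,
      inter_comm, Ioi_inter_Iic, Real.volume_Ioc, sub_zero, ENNReal.ofReal_pow zero_le_two,
      ENNReal.ofReal_ofNat, mul_comm]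
  calc ∫⁻ x in Q, ENNReal.ofReal (log⁺ (localMaximal d ν x).toReal) ∂ν
      ≤ ∫⁻ t in Ioi (0 : ℝ), ν.restrict Q {x | ENNReal.ofReal t < localMaximal d ν x} *
          ENNReal.ofReal (1 + t)⁻¹ :=
          lintegral_posLog_toReal_le_lintegral_measure_lt _ hmeas.aemeasurable
    _ ≤ ∫⁻ t in Ioi (0 : ℝ), ((Iic (2 ^ d)).indicator (fun _ => ν Q) t +
          5 ^ d * K * μ.restrict Q {x | ENNReal.ofReal t ≤ 2 ^ d * localMaximal d ν x}) :=
        setLIntegral_mono' measurableSet_Ioi fun t ht => measure_lt_localMaximal_mul_le hQ hν ht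
    _ = 2 ^ d * ν Q + 5 ^ d * K * ∫⁻ t in Ioi (0 : ℝ),
          μ.restrict Q {x | ENNReal.ofReal t ≤ 2 ^ d * localMaximal d ν x} := by
        have hanti : Antitone fun t : ℝ =>
            μ.restrict Q {x | ENNReal.ofReal t ≤ 2 ^ d * localMaximal d ν x} :=
          fun s t hst => measure_mono fun x hx => (ENNReal.ofReal_le_ofReal hst).trans hx
        rw [lintegral_add_left (measurable_const.indicator measurableSet_Iic), hhead,
          lintegral_const_mul _ hanti.measurable]
    _ ≤ 2 ^ d * ν Q + 5 ^ d * K * ∫⁻ x in Q, 2 ^ d * localMaximal d ν x ∂μ := by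
        gcongr
        exact lintegral_measure_ofReal_le_le_lintegral _ (hmeas.const_mul _).aemeasurable
    _ = 2 ^ d * ν Q + 10 ^ d * K * ∫⁻ x in Q, localMaximal d ν x ∂μ := by
        rw [lintegral_const_mul _ hmeas, show (10 : ℝ≥0∞) = 5 * 2 by norm_num, mul_pow]
        ring

end LLogL

theorem exists_lintegral_mul_posLog_le {X : Type*} [MetricSpace X] [SecondCountableTopology X]
    [HasBesicovitchCovering X] [MeasurableSpace X] [BorelSpace X] {d : ℕ} {μ : Measure X}
    [IsLocallyFiniteMeasure μ] {K : ℝ≥0} {Q : Set X} (hQ : IsLowerRegular d μ K Q) :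
    ∃ C : ℝ≥0, ∀ f : X → ℝ≥0∞, AEMeasurable f μ → ∫⁻ x, f x ∂μ ≤ 1 →
      (∀ᵐ x ∂μ.restrict Q, localMaximal d (μ.withDensity f) x ≠ ∞) →
      ∫⁻ x in Q, f x * ENNReal.ofReal (log⁺ (f x).toReal) ∂μ ≤
        C * ∫⁻ x in Q, localMaximal d (μ.withDensity f) x ∂μ := by
  set A : ℝ≥0 := 2 ^ d * K
  refine ⟨((log⁺ (A : ℝ)).toNNReal + 2 ^ d) * A + 10 ^ d * K, fun f hf hf1 hfin => ?_⟩
  set ν := μ.withDensity f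
  set L := ENNReal.ofReal (log⁺ (A : ℝ))
  have hν : ν univ ≤ 1 := by rwa [withDensity_apply _ MeasurableSet.univ, setLIntegral_univ]
  have : IsFiniteMeasure ν := ⟨hν.trans_lt ENNReal.one_lt_top⟩
  have hM := measurable_localMaximal d ν
  have hfM : ∀ᵐ x ∂μ.restrict Q, f x ≤ A * localMaximal d ν x := by
    filter_upwards [ae_restrict_of_ae (Measure.rnDeriv_withDensity₀ μ hf),
      ae_rnDeriv_le_localMaximal ν hQ] with x hfx hx
    simpa [A, ← hfx] using hx
  have hνQ : ν Q ≤ A * ∫⁻ x in Q, localMaximal d ν x ∂μ := by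
    rw [withDensity_apply', ← lintegral_const_mul _ hM]
    exact lintegral_mono_ae hfM
  calc ∫⁻ x in Q, f x * ENNReal.ofReal (log⁺ (f x).toReal) ∂μ
      ≤ L * ν Q + ∫⁻ x in Q, ENNReal.ofReal (log⁺ (localMaximal d ν x).toReal) ∂ν := by
        rw [withDensity_apply', restrict_withDensity']
        exact lintegral_mul_posLog_toReal_le hf.restrict hM.aemeasurable hfin hfM
    _ ≤ L * ν Q + (2 ^ d * ν Q + 10 ^ d * K * ∫⁻ x in Q, localMaximal d ν x ∂μ) := by
        gcongr
        exact lintegral_posLog_localMaximal_le hQ hν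
    _ = (L + 2 ^ d) * ν Q + 10 ^ d * K * ∫⁻ x in Q, localMaximal d ν x ∂μ := by ring
    _ ≤ (L + 2 ^ d) * (A * ∫⁻ x in Q, localMaximal d ν x ∂μ) +
          10 ^ d * K * ∫⁻ x in Q, localMaximal d ν x ∂μ := by gcongr
    _ = ((((log⁺ (A : ℝ)).toNNReal + 2 ^ d) * A + 10 ^ d * K : ℝ≥0) : ℝ≥0∞) *
          ∫⁻ x in Q, localMaximal d ν x ∂μ := by
        push_cast
        rw [← ENNReal.ofReal]
        ring

theorem exists_isLowerRegular_of_convex {E : Type*} [NormedAddCommGroup E] [NormedSpace ℝ E]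
    [FiniteDimensional ℝ E] [MeasurableSpace E] [BorelSpace E] (μ : Measure E)
    [μ.IsAddHaarMeasure] {Q : Set E} (hconv : Convex ℝ Q) (hbdd : Bornology.IsBounded Q)
    (hQ : μ Q ≠ 0) : ∃ K : ℝ≥0, IsLowerRegular (Module.finrank ℝ E) μ K Q := by
  set d := Module.finrank ℝ E
  obtain ⟨D, hD, hdist⟩ : ∃ D : ℝ, 1 ≤ D ∧ ∀ x ∈ Q, ∀ y ∈ Q, dist x y < D := by
    obtain ⟨C, hC⟩ := isBounded_iff.1 hbdd
    refine ⟨max 1 (C + 1), le_max_left _ _, fun x hx y hy => ?_⟩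
    exact (hC hx hy).trans_lt ((lt_add_one C).trans_le (le_max_right _ _))
  have hD0 : 0 < D := zero_lt_one.trans_le hD
  have hQ_fin : μ Q ≠ ∞ := hbdd.measure_lt_top.ne
  set K : ℝ≥0∞ := ENNReal.ofReal D ^ d / μ Q
  have hK : K ≠ ∞ := ENNReal.div_ne_top (ofReal_pow_ne_top D d) hQ
  refine ⟨K.toNNReal, fun x hx r ⟨hr0, hr1⟩ => ?_⟩
  set t := r / D
  have ht : t ∈ Icc (0 : ℝ) 1 := ⟨by positivity, (div_le_one hD0).2 (by linarith)⟩
  have hsub : AffineMap.homothety x t '' Q ⊆ ball x r ∩ Q := by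
    rintro _ ⟨y, hy, rfl⟩
    refine ⟨?_, ?_⟩
    · rw [mem_ball, dist_homothety_center, Real.norm_of_nonneg ht.1, div_mul_comm]
      exact mul_lt_of_lt_one_left hr0 ((div_lt_one hD0).2 (hdist x hx y hy))
    · rw [AffineMap.homothety_eq_lineMap]
      exact hconv.lineMap_mem hx hy ht
  calc ENNReal.ofReal r ^ d = ENNReal.ofReal D ^ d * ENNReal.ofReal t ^ d := by
        rw [← ofReal_mul_pow hD0.le, mul_div_cancel₀ r hD0.ne']
    _ = K * μ (AffineMap.homothety x t '' Q) := by
        rw [Measure.addHaar_image_homothety, abs_of_nonneg (pow_nonneg ht.1 d),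
          ENNReal.ofReal_pow ht.1, mul_left_comm, ENNReal.div_mul_cancel hQ hQ_fin, mul_comm]
    _ ≤ K.toNNReal * μ (ball x r ∩ Q) := by
        rw [ENNReal.coe_toNNReal hK]
        gcongr

theorem unitQ_eq_preimage (n : ℕ) :
    unitQ n = WithLp.ofLp ⁻¹' univ.pi fun _ : Fin n => Ioo (-(1 / 2) : ℝ) (1 / 2) := by
  ext x
  simp only [unitQ, mem_ofPred_eq, mem_preimage, mem_univ_pi, mem_Ioo]

theorem convex_unitQ (n : ℕ) : Convex ℝ (unitQ n) := by
  rw [unitQ_eq_preimage]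
  exact (convex_pi fun _ _ => convex_Ioo _ _).linear_preimage
    (WithLp.linearEquiv 2 ℝ (Fin n → ℝ)).toLinearMap

theorem isOpen_unitQ (n : ℕ) : IsOpen (unitQ n) := by
  rw [unitQ_eq_preimage]
  exact (isOpen_set_pi finite_univ fun _ _ => isOpen_Ioo).preimage (PiLp.continuous_ofLp 2 _)

theorem isBounded_unitQ (n : ℕ) : Bornology.IsBounded (unitQ n) := by
  rw [unitQ_eq_preimage]
  exact (PiLp.antilipschitzWith_ofLp 2 _).isBounded_preimage (.pi fun _ => isBounded_Ioo _ _)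

theorem volume_unitQ_ne_zero (n : ℕ) : volume (unitQ n) ≠ 0 :=
  ((isOpen_unitQ n).measure_pos volume ⟨0, fun i => by norm_num⟩).ne'

theorem lnp_eq_posLog (t : ℝ) : lnp t = log⁺ t :=
  max_comm _ _

theorem Mloc_eq_toReal_localMaximal {n : ℕ} {v : En n → ℝ} (hv : Integrable v) (x : En n) :
    Mloc n v x = (localMaximal n (volume.withDensity fun y => ‖v y‖ₑ) x).toReal := by
  have : IsFiniteMeasure (volume.withDensity fun y => ‖v y‖ₑ) :=
    isFiniteMeasure_withDensity hv.2.ne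
  rw [localMaximal, iSup_subtype', ENNReal.toReal_iSup fun r =>
    ENNReal.div_ne_top (measure_ne_top _ _) (ofReal_pow_pos r.2.1 n).ne']
  refine iSup_congr fun r => ?_
  rw [ENNReal.toReal_div, ENNReal.toReal_pow, ENNReal.toReal_ofReal r.2.1.le,
    withDensity_apply _ measurableSet_ball, ← integral_norm_eq_lintegral_enorm hv.1.restrict,
    inv_mul_eq_div]
  rfl

theorem ae_ofReal_Mloc_eq_localMaximal {n : ℕ} {v : En n → ℝ} (hv : Integrable v) :
    ∀ᵐ x, ENNReal.ofReal (Mloc n v x) = localMaximal n (volume.withDensity fun y => ‖v y‖ₑ) x := by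
  have : IsFiniteMeasure (volume.withDensity fun y => ‖v y‖ₑ) :=
    isFiniteMeasure_withDensity hv.2.ne
  have hball : ∀ x : En n, ∀ r ∈ Ioo (0 : ℝ) 1,
      volume (closedBall x r) ≤ volume (ball (0 : En n) 1) * ENNReal.ofReal r ^ n :=
    fun x r hr => by
      rw [Measure.addHaar_closedBall volume x hr.1.le, finrank_euclideanSpace_fin,
        ENNReal.ofReal_pow hr.1.le, mul_comm]
  have hball_fin : volume (ball (0 : En n) 1) ≠ ∞ := measure_ball_lt_top.ne
  filter_upwards [ae_localMaximal_ne_top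
    (volume.withDensity fun y => ‖v y‖ₑ) hball_fin hball] with x hx
  rw [Mloc_eq_toReal_localMaximal hv, ENNReal.ofReal_toReal hx]

theorem ofReal_abs_mul_lnp (t : ℝ) :
    ENNReal.ofReal (|t| * lnp |t|) = ‖t‖ₑ * ENNReal.ofReal (log⁺ ‖t‖ₑ.toReal) := by
  rw [lnp_eq_posLog, ENNReal.ofReal_mul (abs_nonneg t), toReal_enorm, norm_eq_abs,
    Real.enorm_eq_ofReal_abs]

theorem Mloc_lower_bound_general (n : ℕ) {Q : Set (En n)} (hconv : Convex ℝ Q)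
    (hbdd : Bornology.IsBounded Q) (hQ : volume Q ≠ 0) :
    ∃ c : ℝ, 0 < c ∧ ∀ v : En n → ℝ, Integrable v → (∫ x, |v x|) ≤ 1 →
      ENNReal.ofReal c * ∫⁻ x in Q, ENNReal.ofReal (|v x| * lnp |v x|) ≤
        ∫⁻ x in Q, ENNReal.ofReal (Mloc n v x) := by
  obtain ⟨K, hK⟩ := exists_isLowerRegular_of_convex volume hconv hbdd hQ
  rw [finrank_euclideanSpace_fin] at hK
  obtain ⟨C, hC⟩ := exists_lintegral_mul_posLog_le hK
  refine ⟨(C + 1)⁻¹, by positivity, fun v hv hv1 => ?_⟩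
  have hnorm : ∫⁻ x, ‖v x‖ₑ ≤ 1 := by
    rw [← ofReal_integral_norm_eq_lintegral_enorm hv]
    exact ENNReal.ofReal_le_one.2 hv1
  have hM := ae_restrict_of_ae (s := Q) (ae_ofReal_Mloc_eq_localMaximal hv)
  have hfin := hM.mono fun x hx => hx ▸ ENNReal.ofReal_ne_top
  have hc : ENNReal.ofReal (C + 1)⁻¹ * C ≤ 1 := by
    rw [← ENNReal.ofReal_coe_nnreal, ← ENNReal.ofReal_mul (by positivity)]
    exact ENNReal.ofReal_le_one.2 (inv_mul_le_one_of_le₀ (by linarith) (by positivity))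
  calc ENNReal.ofReal (C + 1)⁻¹ * ∫⁻ x in Q, ENNReal.ofReal (|v x| * lnp |v x|)
      = ENNReal.ofReal (C + 1)⁻¹ *
          ∫⁻ x in Q, ‖v x‖ₑ * ENNReal.ofReal (log⁺ ‖v x‖ₑ.toReal) := by
        simp only [ofReal_abs_mul_lnp]
    _ ≤ ENNReal.ofReal (C + 1)⁻¹ *
          (C * ∫⁻ x in Q, localMaximal n (volume.withDensity fun y => ‖v y‖ₑ) x) := by
        gcongr
        exact hC _ hv.1.enorm hnorm hfin
    _ ≤ ∫⁻ x in Q, localMaximal n (volume.withDensity fun y => ‖v y‖ₑ) x := by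
        grw [← mul_assoc, hc, one_mul]
    _ = ∫⁻ x in Q, ENNReal.ofReal (Mloc n v x) := (lintegral_congr_ae hM).symm

/-- **Stein-type lower bound for the local maximal function.**
There is `c = c(n) > 0` such that for every integrable `v` supported in
`Q = (-1/2,1/2)^n` with `‖v‖_{L^1} = 1`, one has
`∫_Q M^loc v ≥ c ∫_Q |v| ln₊|v|`. -/
theorem Mloc_lower_bound (n : ℕ) (hn : 1 ≤ n) :
    ∃ c : ℝ, 0 < c ∧ ∀ v : En n → ℝ, Integrable v →
      (∀ x, x ∉ unitQ n → v x = 0) → (∫ x, |v x|) = 1 →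
      ENNReal.ofReal c * ∫⁻ x in unitQ n, ENNReal.ofReal (|v x| * lnp |v x|) ≤
        ∫⁻ x in unitQ n, ENNReal.ofReal (Mloc n v x) := by
  obtain ⟨c, hc, h⟩ := Mloc_lower_bound_general n (convex_unitQ n) (isBounded_unitQ n)
    (volume_unitQ_ne_zero n)
  exact ⟨c, hc, fun v hv _ hv1 => h v hv hv1.le⟩
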